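/- Let (X₁,X₂,X₃) be a centered Gaussian random vector in ℝ³ with correlation coefficients ρ_{12}, ρ_{13} and nondegenerate components. Then for every α₁ ∈ (0,1) and α₂,α₃ ∈ (0,∞), E[|X₁|^{-α₁}|X₂|^{α₂}|X₃|^{α₃}] ≥ (1-ρ_{12}²)^{α₂/2}(1-ρ_{13}²)^{α₃/2} · E[|X₁|^{-α₁}] E[|X₂|^{α₂}] E[|X₃|^{α₃}]. -/

import Mathlib

open MeasureTheory Matrix

/-!
For functions `f`, `g` that are nondecreasing in the absolute value and a centered Gaussian pair
`(Y, Z)`, one has `𝔼 f(Y) 𝔼 g(Z) ≤ 𝔼 f(Y) g(Z)`: comparing two Gaussian densities of equal variance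
by reflection about the midpoint of their means shows that `𝔼 [g(Z) | Y]` is again nondecreasing in
`|Y|`, and Chebyshev's association inequality applies.

The weight `|x| ^ (-α)` is the mixture of the functions `exp (-t x²)`, `t > 0`, with density
proportional to `t ^ (α / 2 - 1)`. Tilting a centered Gaussian law by `exp (-t x²)` gives a centered
Gaussian law of smaller variance, so a lower bound for the integral of a function against every
centered Gaussian law persists under the weight `|x| ^ (-α)`.

Regressing `Y = kX + U` and `Z = lX + V` makes `(U, V)` independent of `X`. Whatever the variance of
`X`, both `𝔼 f(kX + U) ≥ 𝔼 f(U)` and `𝔼 g(lX + V) ≥ 𝔼 g(V)`, so the pair inequality bounds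
`𝔼 f(Y) g(Z)` from below by `𝔼 f(U) 𝔼 g(V)` uniformly in that variance. Replacing `Y` and `Z` by
their residuals multiplies the variances by `1 - ρ²`, hence the constant.
-/

open ProbabilityTheory Set
open scoped NNReal ENNReal

namespace GaussianProduct

lemma add_mul_le_add_mul_of_le {a b c d : ℝ≥0∞} (hab : a ≤ b) (hcd : c ≤ d) :
    a * d + b * c ≤ a * c + b * d := by
  obtain ⟨e, rfl⟩ := exists_add_of_le hab
  calc a * d + (a + e) * c = a * c + (a * d + e * c) := by ring
    _ ≤ a * c + (a * d + e * d) := by gcongr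
    _ = a * c + (a + e) * d := by ring

lemma mul_add_mul_le_of_monovary {α : Type*} {f g : α → ℝ≥0∞} (hfg : Monovary f g) (x y : α) :
    f x * g y + f y * g x ≤ f x * g x + f y * g y := by
  rcases lt_trichotomy (g x) (g y) with hlt | heq | hgt
  · exact add_mul_le_add_mul_of_le (hfg hlt) hlt.le
  · rw [heq]
  · calc f x * g y + f y * g x = f y * g x + f x * g y := add_comm _ _
      _ ≤ f y * g y + f x * g x := add_mul_le_add_mul_of_le (hfg hgt) hgt.le
      _ = f x * g x + f y * g y := add_comm _ _

lemma lintegral_mul_lintegral_le_of_monovary {α : Type*} [MeasurableSpace α] {μ : Measure α}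
    [IsProbabilityMeasure μ] {f g : α → ℝ≥0∞} (hf : Measurable f) (hg : Measurable g)
    (hfg : Monovary f g) :
    (∫⁻ x, f x ∂μ) * ∫⁻ x, g x ∂μ ≤ ∫⁻ x, f x * g x ∂μ := by
  refine (ENNReal.mul_le_mul_iff_right two_ne_zero ENNReal.ofNat_ne_top).1 ?_
  calc 2 * ((∫⁻ x, f x ∂μ) * ∫⁻ x, g x ∂μ)
      = ∫⁻ z, f z.1 * g z.2 + g z.1 * f z.2 ∂μ.prod μ := by
        rw [lintegral_add_left (by fun_prop), lintegral_prod_mul hf.aemeasurable hg.aemeasurable,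
          lintegral_prod_mul hg.aemeasurable hf.aemeasurable]
        ring
    _ ≤ ∫⁻ z, f z.1 * g z.1 + f z.2 * g z.2 ∂μ.prod μ := by
        refine lintegral_mono fun z => ?_
        rw [mul_comm (g z.1)]
        exact mul_add_mul_le_of_monovary hfg z.1 z.2
    _ = 2 * ∫⁻ x, f x * g x ∂μ := by
        rw [lintegral_add_left (by fun_prop),
          measurePreserving_fst.lintegral_comp (f := fun x => f x * g x) (by fun_prop),
          measurePreserving_snd.lintegral_comp (f := fun x => f x * g x) (by fun_prop)]
        ring

/-- A function on `ℝ` that is a nondecreasing function of `|x|`. Such functions, rather than only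
the powers `|x| ^ β`, are what the correlation inequalities below apply to; in particular they are
even. -/
def AbsMonotone (f : ℝ → ℝ≥0∞) : Prop :=
  ∀ ⦃x y : ℝ⦄, |x| ≤ |y| → f x ≤ f y

namespace AbsMonotone

variable {f g : ℝ → ℝ≥0∞}

lemma apply_abs (hf : AbsMonotone f) (x : ℝ) : f |x| = f x :=
  le_antisymm (hf (abs_abs x).le) (hf (abs_abs x).ge)

lemma measurable (hf : AbsMonotone f) : Measurable f := by
  have hmono : Monotone fun x => f (max x 0) := fun x y hxy => by
    refine hf ?_
    rw [abs_of_nonneg (le_max_right x 0), abs_of_nonneg (le_max_right y 0)]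
    exact max_le_max_right 0 hxy
  convert hmono.measurable.comp measurable_abs using 1
  ext x
  simp [hf.apply_abs]

lemma monovary (hf : AbsMonotone f) (hg : AbsMonotone g) : Monovary f g := fun _ _ hxy =>
  hf (not_le.1 fun hyx => (hg hyx).not_gt hxy).le

end AbsMonotone

lemma absMonotone_ofReal_abs_rpow {β : ℝ} (hβ : 0 ≤ β) :
    AbsMonotone fun x => ENNReal.ofReal (|x| ^ β) := fun _ _ hxy =>
  ENNReal.ofReal_le_ofReal (Real.rpow_le_rpow (abs_nonneg _) hxy hβ)

lemma gaussianPDF_le_of_abs_sub_le {a b x : ℝ} (v : ℝ≥0) (h : |x - b| ≤ |x - a|) :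
    gaussianPDF a v x ≤ gaussianPDF b v x := by
  have hsq : (x - b) ^ 2 ≤ (x - a) ^ 2 := sq_le_sq.2 h
  simp only [gaussianPDF, gaussianPDFReal]
  gcongr

lemma gaussianPDF_reflect (a b : ℝ) (v : ℝ≥0) (x : ℝ) :
    gaussianPDF a v (a + b - x) = gaussianPDF b v x := by
  simp only [gaussianPDF, gaussianPDFReal]
  congr 4
  ring

lemma lintegral_gaussianReal (a : ℝ) {v : ℝ≥0} (hv : v ≠ 0) (f : ℝ → ℝ≥0∞) :
    ∫⁻ x, f x ∂gaussianReal a v = ∫⁻ x, gaussianPDF a v x * f x := by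
  rw [gaussianReal_of_var_ne_zero a hv]
  exact lintegral_withDensity_eq_lintegral_mul_non_measurable₀ _
    (measurable_gaussianPDF a v).aemeasurable (ae_of_all _ fun _ => gaussianPDF_lt_top) f

lemma AbsMonotone.lintegral_gaussianReal_le_of_nonneg {f : ℝ → ℝ≥0∞} (hf : AbsMonotone f)
    {a b : ℝ} (ha : 0 ≤ a) (hab : a ≤ b) (v : ℝ≥0) :
    ∫⁻ x, f x ∂gaussianReal a v ≤ ∫⁻ x, f x ∂gaussianReal b v := by
  rcases eq_or_ne v 0 with rfl | hv
  · simp only [gaussianReal_zero_var, lintegral_dirac]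
    exact hf (abs_le_abs_of_nonneg ha hab)
  have hfm := hf.measurable
  have symmetrized (m : ℝ) : 2 * ∫⁻ x, f x ∂gaussianReal m v =
      ∫⁻ x, gaussianPDF m v x * f x + gaussianPDF m v (a + b - x) * f (a + b - x) := by
    rw [lintegral_gaussianReal m hv, lintegral_add_left (by fun_prop),
      lintegral_sub_left_eq_self (fun x => gaussianPDF m v x * f x) (a + b), two_mul]
  refine (ENNReal.mul_le_mul_iff_right two_ne_zero ENNReal.ofNat_ne_top).1 ?_
  rw [symmetrized a, symmetrized b]
  refine lintegral_mono fun x => ?_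
  rw [gaussianPDF_reflect, add_comm a b, gaussianPDF_reflect]
  rcases le_total (a + b) (2 * x) with hx | hx
  · have hpdf : gaussianPDF a v x ≤ gaussianPDF b v x :=
      gaussianPDF_le_of_abs_sub_le v (abs_le_abs (by linarith) (by linarith))
    have hfle : f (b + a - x) ≤ f x := hf (abs_le_abs (by linarith) (by linarith))
    simpa only [add_comm] using add_mul_le_add_mul_of_le hpdf hfle
  · have hpdf : gaussianPDF b v x ≤ gaussianPDF a v x := by
      refine gaussianPDF_le_of_abs_sub_le v ?_
      rw [abs_sub_comm x b]
      exact abs_le_abs (by linarith) (by linarith)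
    have hfle : f x ≤ f (b + a - x) := hf (abs_le_abs (by linarith) (by linarith))
    simpa only [add_comm] using add_mul_le_add_mul_of_le hpdf hfle

lemma AbsMonotone.lintegral_gaussianReal_abs {f : ℝ → ℝ≥0∞} (hf : AbsMonotone f) (m : ℝ)
    (v : ℝ≥0) : ∫⁻ x, f x ∂gaussianReal |m| v = ∫⁻ x, f x ∂gaussianReal m v := by
  rcases abs_choice m with h | h
  · rw [h]
  · rw [h, ← gaussianReal_map_neg, lintegral_map hf.measurable measurable_neg]
    exact lintegral_congr fun x => by rw [← hf.apply_abs, abs_neg, hf.apply_abs]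

lemma AbsMonotone.lintegral_gaussianReal_shift {f : ℝ → ℝ≥0∞} (hf : AbsMonotone f)
    (k : ℝ) (v : ℝ≥0) : AbsMonotone fun x => ∫⁻ u, f (k * x + u) ∂gaussianReal 0 v := by
  have shift_mean (c : ℝ) :
      ∫⁻ u, f (c + u) ∂gaussianReal 0 v = ∫⁻ u, f u ∂gaussianReal |c| v := by
    rw [hf.lintegral_gaussianReal_abs, ← zero_add c, ← gaussianReal_map_const_add,
      lintegral_map hf.measurable (measurable_const_add c), zero_add]
  intro x y hxy
  simp only [shift_mean]
  refine hf.lintegral_gaussianReal_le_of_nonneg (abs_nonneg _) ?_ v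
  rw [abs_mul, abs_mul]
  gcongr

section Regression

variable {Ω : Type*} [MeasurableSpace Ω] {P : Measure Ω}

/-- The Pearson correlation coefficient of two random variables. -/
noncomputable def correlation (X Y : Ω → ℝ) (P : Measure Ω) : ℝ :=
  cov[X, Y; P] / (√Var[X; P] * √Var[Y; P])

/-- The slope of the linear regression of `Y` on `X`. It is `0` when `X` is degenerate, and
`regressionResidual` is uncorrelated with `X` in that case too. -/
noncomputable def regressionSlope (X Y : Ω → ℝ) (P : Measure Ω) : ℝ :=
  cov[X, Y; P] / Var[X; P]

/-- The residual of the linear regression of `Y` on `X`; for a centered Gaussian pair it is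
`Y - 𝔼[Y | X]`. -/
noncomputable def regressionResidual (X Y : Ω → ℝ) (P : Measure Ω) (ω : Ω) : ℝ :=
  Y ω - regressionSlope X Y P * X ω

lemma regressionSlope_mul_add_residual (X Y : Ω → ℝ) (P : Measure Ω) (ω : Ω) :
    regressionSlope X Y P * X ω + regressionResidual X Y P ω = Y ω :=
  add_sub_cancel _ _

lemma covariance_eq_zero_of_variance_eq_zero [IsFiniteMeasure P] {X : Ω → ℝ} (Y : Ω → ℝ)
    (hX : MemLp X 2 P) (hvar : Var[X; P] = 0) : cov[X, Y; P] = 0 := by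
  refine integral_eq_zero_of_ae ?_
  filter_upwards [ae_eq_integral_of_variance_eq_zero hX hvar] with ω hω
  simp [hω]

lemma covariance_regressionResidual [IsFiniteMeasure P] {X Y : Ω → ℝ} (hX : MemLp X 2 P)
    (hY : MemLp Y 2 P) : cov[X, regressionResidual X Y P; P] = 0 := by
  unfold regressionResidual
  rw [covariance_fun_sub_right hX hY (hX.const_mul _), covariance_const_mul_right,
    covariance_self hX.aemeasurable, regressionSlope, sub_eq_zero]
  rcases eq_or_ne Var[X; P] 0 with hvar | hvar
  · rw [covariance_eq_zero_of_variance_eq_zero Y hX hvar, zero_div, zero_mul]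
  · rw [div_mul_cancel₀ _ hvar]

lemma variance_regressionResidual [IsFiniteMeasure P] {X Y : Ω → ℝ} (hX : MemLp X 2 P)
    (hY : MemLp Y 2 P) (hvX : Var[X; P] ≠ 0) (hvY : Var[Y; P] ≠ 0) :
    Var[regressionResidual X Y P; P] = (1 - correlation X Y P ^ 2) * Var[Y; P] := by
  unfold regressionResidual
  rw [variance_fun_sub hY (hX.const_mul _), covariance_const_mul_right, variance_const_mul,
    covariance_comm, correlation, regressionSlope, div_pow _ (_ * _), mul_pow (√_),
    Real.sq_sqrt (variance_nonneg _ _), Real.sq_sqrt (variance_nonneg _ _)]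
  field_simp
  ring

lemma integral_regressionResidual {X Y : Ω → ℝ} (hX : Integrable X P)
    (hY : Integrable Y P) (hX0 : ∫ ω, X ω ∂P = 0) (hY0 : ∫ ω, Y ω ∂P = 0) :
    ∫ ω, regressionResidual X Y P ω ∂P = 0 := by
  unfold regressionResidual
  rw [integral_sub hY (hX.const_mul _), integral_const_mul, hX0, hY0, mul_zero, sub_zero]

lemma hasGaussianLaw_regressionResidual {X Y : Ω → ℝ}
    (h : HasGaussianLaw (fun ω => (X ω, Y ω)) P) :
    HasGaussianLaw (fun ω => (X ω, regressionResidual X Y P ω)) P := by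
  let x := ContinuousLinearMap.fst ℝ ℝ ℝ
  let y := ContinuousLinearMap.snd ℝ ℝ ℝ
  simpa [x, y, regressionResidual] using h.map_fun (x.prod (y - regressionSlope X Y P • x))

lemma hasGaussianLaw_regressionResidual_prodMk {X Y Z : Ω → ℝ}
    (h : HasGaussianLaw (fun ω => (X ω, Y ω, Z ω)) P) :
    HasGaussianLaw (fun ω => (X ω, regressionResidual X Y P ω, regressionResidual X Z P ω)) P := by
  let x := ContinuousLinearMap.fst ℝ ℝ (ℝ × ℝ)
  let yz := ContinuousLinearMap.snd ℝ ℝ (ℝ × ℝ)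
  simpa [x, yz, regressionResidual, mul_comm] using
    h.map_fun (x.prod (yz - x.smulRight (regressionSlope X Y P, regressionSlope X Z P)))

lemma indepFun_regressionResidual_prodMk {X Y Z : Ω → ℝ}
    (h : HasGaussianLaw (fun ω => (X ω, Y ω, Z ω)) P) :
    IndepFun X (fun ω => (regressionResidual X Y P ω, regressionResidual X Z P ω)) P := by
  have hP := h.isProbabilityMeasure
  have hres := hasGaussianLaw_regressionResidual_prodMk h
  have hX := h.fst.memLp_two
  have hU := hres.snd.fst.memLp_two
  have hV := hres.snd.snd.memLp_two
  refine hres.indepFun_of_covariance_strongDual fun L₁ L₂ => ?_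
  have hL₁ : L₁ ∘ X = fun ω => L₁ 1 * X ω := by
    ext ω
    simpa [mul_comm] using L₁.map_smul (X ω) 1
  have hL₂ : (L₂ ∘ fun ω => (regressionResidual X Y P ω, regressionResidual X Z P ω)) =
      (fun ω => L₂ (1, 0) * regressionResidual X Y P ω) +
        fun ω => L₂ (0, 1) * regressionResidual X Z P ω := by
    ext ω
    have hsplit (a b : ℝ) : (a, b) = a • ((1, 0) : ℝ × ℝ) + b • ((0, 1) : ℝ × ℝ) := by simp
    rw [Function.comp_apply, Pi.add_apply, hsplit (regressionResidual X Y P ω), map_add, map_smul,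
      map_smul, smul_eq_mul, smul_eq_mul, mul_comm, mul_comm (regressionResidual X Z P ω)]
  rw [hL₁, hL₂, covariance_const_mul_left,
    covariance_add_right hX (hU.const_mul _) (hV.const_mul _),
    covariance_const_mul_right, covariance_const_mul_right,
    covariance_regressionResidual hX h.snd.fst.memLp_two,
    covariance_regressionResidual hX h.snd.snd.memLp_two]
  simp only [mul_zero, add_zero]

end Regression

section Correlation

variable {Ω : Type*} [MeasurableSpace Ω] {P : Measure Ω}

lemma map_eq_gaussianReal_of_integral_eq_zero {X : Ω → ℝ} (hX : HasGaussianLaw X P)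
    (hX0 : ∫ ω, X ω ∂P = 0) : P.map X = gaussianReal 0 Var[X; P].toNNReal := by
  rw [hX.map_eq_gaussianReal, hX0]

lemma lintegral_comp_prodMk_of_indepFun [IsFiniteMeasure P] {α β : Type*} [MeasurableSpace α]
    [MeasurableSpace β] {X : Ω → α} {U : Ω → β} (hX : AEMeasurable X P) (hU : AEMeasurable U P)
    (hXU : IndepFun X U P) {F : α × β → ℝ≥0∞} (hF : Measurable F) :
    ∫⁻ ω, F (X ω, U ω) ∂P = ∫⁻ x, ∫⁻ u, F (x, u) ∂P.map U ∂P.map X := by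
  rw [← lintegral_prod _ hF.aemeasurable,
    ← (indepFun_iff_map_prod_eq_prod_map_map hX hU).1 hXU,
    lintegral_map' hF.aemeasurable (hX.prodMk hU)]

lemma AbsMonotone.lintegral_le_lintegral_mul_add [IsProbabilityMeasure P] {f : ℝ → ℝ≥0∞}
    (hf : AbsMonotone f) {X U : Ω → ℝ} (hX : AEMeasurable X P) (hU : HasGaussianLaw U P)
    (hU0 : ∫ ω, U ω ∂P = 0) (hXU : IndepFun X U P) (k : ℝ) :
    ∫⁻ ω, f (U ω) ∂P ≤ ∫⁻ ω, f (k * X ω + U ω) ∂P := by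
  have hfm := hf.measurable
  have := Measure.isProbabilityMeasure_map hX
  rw [lintegral_comp_prodMk_of_indepFun (F := fun z => f (k * z.1 + z.2)) hX hU.aemeasurable hXU
      (by fun_prop), ← lintegral_map' hfm.aemeasurable hU.aemeasurable,
    map_eq_gaussianReal_of_integral_eq_zero hU hU0]
  calc ∫⁻ u, f u ∂gaussianReal 0 Var[U; P].toNNReal
      = ∫⁻ _, ∫⁻ u, f (k * 0 + u) ∂gaussianReal 0 Var[U; P].toNNReal ∂P.map X := by
        simp only [mul_zero, zero_add, lintegral_const, measure_univ, mul_one]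
    _ ≤ _ := lintegral_mono fun x => hf.lintegral_gaussianReal_shift k _ (by simp)

lemma AbsMonotone.lintegral_mul_lintegral_le {f g : ℝ → ℝ≥0∞} (hf : AbsMonotone f)
    (hg : AbsMonotone g) {X Y : Ω → ℝ} (h : HasGaussianLaw (fun ω => (X ω, Y ω)) P)
    (hX0 : ∫ ω, X ω ∂P = 0) (hY0 : ∫ ω, Y ω ∂P = 0) :
    (∫⁻ ω, f (X ω) ∂P) * ∫⁻ ω, g (Y ω) ∂P ≤ ∫⁻ ω, f (X ω) * g (Y ω) ∂P := by
  have hP := h.isProbabilityMeasure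
  have hfm := hf.measurable
  have hgm := hg.measurable
  have hX := h.fst.aemeasurable
  have := Measure.isProbabilityMeasure_map hX
  set k := regressionSlope X Y P
  set W := regressionResidual X Y P
  have hXW : HasGaussianLaw (fun ω => (X ω, W ω)) P := hasGaussianLaw_regressionResidual h
  have hindep : IndepFun X W P := hXW.indepFun_of_covariance_eq_zero
    (covariance_regressionResidual h.fst.memLp_two h.snd.memLp_two)
  have hW0 : ∫ ω, W ω ∂P = 0 :=
    integral_regressionResidual h.fst.integrable h.snd.integrable hX0 hY0
  set G : ℝ → ℝ≥0∞ := fun x => ∫⁻ w, g (k * x + w) ∂P.map W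
  have hG : AbsMonotone G := by
    simpa only [G, map_eq_gaussianReal_of_integral_eq_zero hXW.snd hW0] using
      hg.lintegral_gaussianReal_shift k _
  have disintegrate {F : ℝ → ℝ≥0∞} (hF : Measurable F) :
      ∫⁻ ω, F (X ω) * g (Y ω) ∂P = ∫⁻ x, F x * G x ∂P.map X := by
    simp_rw [← regressionSlope_mul_add_residual X Y P]
    rw [lintegral_comp_prodMk_of_indepFun (F := fun z => F z.1 * g (k * z.1 + z.2)) hX
      hXW.snd.aemeasurable hindep (by fun_prop)]
    exact lintegral_congr fun x =>
      lintegral_const_mul (F x) (hgm.comp (measurable_const_add (k * x)))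
  calc (∫⁻ ω, f (X ω) ∂P) * ∫⁻ ω, g (Y ω) ∂P
      = (∫⁻ x, f x ∂P.map X) * ∫⁻ x, G x ∂P.map X := by
        rw [lintegral_map' hfm.aemeasurable hX]
        simpa only [one_mul] using congrArg _ (disintegrate (F := fun _ => 1) measurable_const)
    _ ≤ ∫⁻ x, f x * G x ∂P.map X :=
        lintegral_mul_lintegral_le_of_monovary hfm hG.measurable (hf.monovary hG)
    _ = ∫⁻ ω, f (X ω) * g (Y ω) ∂P := (disintegrate hfm).symm

lemma AbsMonotone.lintegral_mul_lintegral_le_of_indepFun {f g : ℝ → ℝ≥0∞} (hf : AbsMonotone f)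
    (hg : AbsMonotone g) {X U V : Ω → ℝ} (h : HasGaussianLaw (fun ω => (X ω, U ω, V ω)) P)
    (hX0 : ∫ ω, X ω ∂P = 0) (hU0 : ∫ ω, U ω ∂P = 0) (hV0 : ∫ ω, V ω ∂P = 0)
    (hindep : IndepFun X (fun ω => (U ω, V ω)) P) (k l : ℝ) :
    (∫⁻ ω, f (U ω) ∂P) * ∫⁻ ω, g (V ω) ∂P ≤
      ∫⁻ ω, f (k * X ω + U ω) * g (l * X ω + V ω) ∂P := by
  have hP := h.isProbabilityMeasure
  let x := ContinuousLinearMap.fst ℝ ℝ (ℝ × ℝ)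
  let uv := ContinuousLinearMap.snd ℝ ℝ (ℝ × ℝ)
  have hshift : HasGaussianLaw (fun ω => (k * X ω + U ω, l * X ω + V ω)) P := by
    simpa [x, uv, mul_comm] using h.map_fun (x.smulRight (k, l) + uv)
  have integral_shift {W : Ω → ℝ} (hW : HasGaussianLaw W P) (hW0 : ∫ ω, W ω ∂P = 0) (m : ℝ) :
      ∫ ω, m * X ω + W ω ∂P = 0 := by
    rw [integral_add (h.fst.integrable.const_mul m) hW.integrable, integral_const_mul, hX0, hW0,
      mul_zero, add_zero]
  calc (∫⁻ ω, f (U ω) ∂P) * ∫⁻ ω, g (V ω) ∂P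
      ≤ (∫⁻ ω, f (k * X ω + U ω) ∂P) * ∫⁻ ω, g (l * X ω + V ω) ∂P :=
        mul_le_mul'
          (hf.lintegral_le_lintegral_mul_add h.fst.aemeasurable h.snd.fst hU0
            (hindep.comp measurable_id measurable_fst) k)
          (hg.lintegral_le_lintegral_mul_add h.fst.aemeasurable h.snd.snd hV0
            (hindep.comp measurable_id measurable_snd) l)
    _ ≤ ∫⁻ ω, f (k * X ω + U ω) * g (l * X ω + V ω) ∂P :=
        hf.lintegral_mul_lintegral_le hg hshift (integral_shift h.snd.fst hU0 k)
          (integral_shift h.snd.snd hV0 l)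

end Correlation

section NegativePower

lemma Gamma_mul_abs_rpow_neg_eq_lintegral {α x : ℝ} (hα : 0 < α) (hx : x ≠ 0) :
    ENNReal.ofReal (Real.Gamma (α / 2)) * ENNReal.ofReal (|x| ^ (-α)) =
      ∫⁻ t in Ioi (0 : ℝ), ENNReal.ofReal (t ^ (α / 2 - 1) * Real.exp (-(x ^ 2 * t))) := by
  have hΓ := Real.Gamma_pos_of_pos (half_pos hα)
  have hpow : (1 / x ^ 2) ^ (α / 2) = |x| ^ (-α) := by
    rw [one_div, Real.inv_rpow (sq_nonneg x), ← sq_abs, ← Real.rpow_natCast_mul (abs_nonneg x),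
      Real.rpow_neg (abs_nonneg x)]
    congr 2
    push_cast
    ring
  have hint := Real.integral_rpow_mul_exp_neg_mul_Ioi (half_pos hα) (pow_pos (abs_pos.2 hx) 2)
  rw [sq_abs] at hint
  rw [← ENNReal.ofReal_mul hΓ.le, ← ofReal_integral_eq_lintegral_ofReal, hint, hpow, mul_comm]
  · refine Integrable.of_integral_ne_zero ?_
    rw [hint]
    positivity
  · filter_upwards [ae_restrict_mem measurableSet_Ioi] with t ht
    exact mul_nonneg (Real.rpow_nonneg (le_of_lt ht) _) (Real.exp_nonneg _)

lemma Gamma_mul_lintegral_abs_rpow_neg {μ : Measure ℝ} [SFinite μ] (hμ : ∀ᵐ x ∂μ, x ≠ 0)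
    {α : ℝ} (hα : 0 < α) {H : ℝ → ℝ≥0∞} (hH : Measurable H) :
    ENNReal.ofReal (Real.Gamma (α / 2)) * ∫⁻ x, ENNReal.ofReal (|x| ^ (-α)) * H x ∂μ =
      ∫⁻ t in Ioi (0 : ℝ), ENNReal.ofReal (t ^ (α / 2 - 1)) *
        ∫⁻ x, ENNReal.ofReal (Real.exp (-(x ^ 2 * t))) * H x ∂μ := by
  calc ENNReal.ofReal (Real.Gamma (α / 2)) * ∫⁻ x, ENNReal.ofReal (|x| ^ (-α)) * H x ∂μ
      = ∫⁻ x, (∫⁻ t in Ioi (0 : ℝ),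
          ENNReal.ofReal (t ^ (α / 2 - 1) * Real.exp (-(x ^ 2 * t))) * H x) ∂μ := by
        rw [← lintegral_const_mul _ (by fun_prop)]
        refine lintegral_congr_ae (hμ.mono fun x hx => ?_)
        dsimp only
        rw [lintegral_mul_const _ (by fun_prop), ← Gamma_mul_abs_rpow_neg_eq_lintegral hα hx,
          mul_assoc]
    _ = ∫⁻ t in Ioi (0 : ℝ), ∫⁻ x,
          ENNReal.ofReal (t ^ (α / 2 - 1) * Real.exp (-(x ^ 2 * t))) * H x ∂μ :=
        lintegral_lintegral_swap (by fun_prop)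
    _ = _ := by
        refine setLIntegral_congr_fun measurableSet_Ioi fun t ht => ?_
        rw [← lintegral_const_mul _ (by fun_prop)]
        refine lintegral_congr fun x => ?_
        rw [ENNReal.ofReal_mul (Real.rpow_nonneg (le_of_lt ht) _), mul_assoc]

lemma gaussianPDFReal_mul_exp_neg_sq {v : ℝ≥0} (hv : v ≠ 0) (t : ℝ≥0) (x : ℝ) :
    gaussianPDFReal 0 v x * Real.exp (-(x ^ 2 * t)) =
      (√(1 + 2 * t * v))⁻¹ * gaussianPDFReal 0 (v / (1 + 2 * t * v)) x := by
  have hexp : Real.exp (-x ^ 2 / (2 * (v / (1 + 2 * t * v)))) =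
      Real.exp (-x ^ 2 / (2 * v)) * Real.exp (-(x ^ 2 * t)) := by
    rw [← Real.exp_add]
    congr 1
    field_simp
    ring
  simp only [gaussianPDFReal, sub_zero]
  push_cast
  rw [hexp, ← mul_div_assoc, Real.sqrt_div (by positivity)]
  field_simp

lemma lintegral_exp_neg_sq_gaussianReal {v : ℝ≥0} (hv : v ≠ 0) (t : ℝ≥0) (H : ℝ → ℝ≥0∞) :
    ∫⁻ x, ENNReal.ofReal (Real.exp (-(x ^ 2 * t))) * H x ∂gaussianReal 0 v =
      ENNReal.ofReal (√(1 + 2 * t * v))⁻¹ * ∫⁻ x, H x ∂gaussianReal 0 (v / (1 + 2 * t * v)) := by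
  have hw : v / (1 + 2 * t * v) ≠ 0 := by positivity
  rw [lintegral_gaussianReal 0 hv, lintegral_gaussianReal 0 hw,
    ← lintegral_const_mul' _ _ ENNReal.ofReal_ne_top]
  refine lintegral_congr fun x => ?_
  rw [← mul_assoc, ← mul_assoc, gaussianPDF, gaussianPDF,
    ← ENNReal.ofReal_mul (gaussianPDFReal_nonneg _ _ _), ← ENNReal.ofReal_mul (by positivity),
    gaussianPDFReal_mul_exp_neg_sq hv]

lemma lintegral_abs_rpow_neg_mul_le {v : ℝ≥0} (hv : v ≠ 0) {α : ℝ} (hα : 0 < α)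
    {H : ℝ → ℝ≥0∞} (hH : Measurable H) {M : ℝ≥0∞} (hM : ∀ w, M ≤ ∫⁻ x, H x ∂gaussianReal 0 w) :
    (∫⁻ x, ENNReal.ofReal (|x| ^ (-α)) ∂gaussianReal 0 v) * M ≤
      ∫⁻ x, ENNReal.ofReal (|x| ^ (-α)) * H x ∂gaussianReal 0 v := by
  have := nullSingletonClass_gaussianReal (μ := 0) hv
  have hne : ∀ᵐ x ∂gaussianReal 0 v, x ≠ 0 := Measure.ae_ne _ 0
  have hΓ : ENNReal.ofReal (Real.Gamma (α / 2)) ≠ 0 := by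
    simpa using Real.Gamma_pos_of_pos (half_pos hα)
  refine (ENNReal.mul_le_mul_iff_right hΓ ENNReal.ofReal_ne_top).1 ?_
  rw [← lintegral_mul_const _ (by fun_prop),
    Gamma_mul_lintegral_abs_rpow_neg hne hα measurable_const,
    Gamma_mul_lintegral_abs_rpow_neg hne hα hH]
  refine setLIntegral_mono' measurableSet_Ioi fun t ht => ?_
  lift t to ℝ≥0 using le_of_lt ht
  rw [lintegral_exp_neg_sq_gaussianReal hv, lintegral_exp_neg_sq_gaussianReal hv,
    lintegral_const, measure_univ, mul_one]
  gcongr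
  exact hM _

end NegativePower

section GaussianTriple

variable {Ω : Type*} [MeasurableSpace Ω] {P : Measure Ω}

lemma AbsMonotone.lintegral_mul_lintegral_le_lintegral_shift {f g : ℝ → ℝ≥0∞}
    (hf : AbsMonotone f) (hg : AbsMonotone g) {ρ : Measure (ℝ × ℝ)} [IsGaussian ρ]
    (hρ₁ : ∫ u, u.1 ∂ρ = 0) (hρ₂ : ∫ u, u.2 ∂ρ = 0) (k l : ℝ) (v : ℝ≥0) :
    (∫⁻ u, f u.1 ∂ρ) * ∫⁻ u, g u.2 ∂ρ ≤
      ∫⁻ x, ∫⁻ u, f (k * x + u.1) * g (l * x + u.2) ∂ρ ∂gaussianReal 0 v := by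
  have hfm := hf.measurable
  have hgm := hg.measurable
  have hlaw : HasGaussianLaw (fun z : ℝ × ℝ × ℝ => (z.1, z.2.1, z.2.2))
    ((gaussianReal 0 v).prod ρ) := IsGaussian.hasGaussianLaw_id
  have hindep : IndepFun (fun z : ℝ × ℝ × ℝ => z.1) (fun z => (z.2.1, z.2.2))
    ((gaussianReal 0 v).prod ρ) := indepFun_prod measurable_id measurable_id
  have key := hf.lintegral_mul_lintegral_le_of_indepFun hg hlaw
    (by rw [integral_fun_fst (fun x => x), integral_id_gaussianReal, smul_zero])
    (by rw [integral_fun_snd (fun u : ℝ × ℝ => u.1), hρ₁, smul_zero])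
    (by rw [integral_fun_snd (fun u : ℝ × ℝ => u.2), hρ₂, smul_zero]) hindep k l
  rwa [measurePreserving_snd.lintegral_comp (f := fun u : ℝ × ℝ => f u.1) (by fun_prop),
    measurePreserving_snd.lintegral_comp (f := fun u : ℝ × ℝ => g u.2) (by fun_prop),
    lintegral_prod _ (by fun_prop)] at key

lemma lintegral_comp_eq_lintegral_regressionResidual {X Y Z : Ω → ℝ}
    (h : HasGaussianLaw (fun ω => (X ω, Y ω, Z ω)) P) {F : ℝ × ℝ × ℝ → ℝ≥0∞} (hF : Measurable F) :
    ∫⁻ ω, F (X ω, Y ω, Z ω) ∂P =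
      ∫⁻ x, ∫⁻ u, F (x, regressionSlope X Y P * x + u.1, regressionSlope X Z P * x + u.2)
        ∂P.map (fun ω => (regressionResidual X Y P ω, regressionResidual X Z P ω)) ∂P.map X := by
  have hP := h.isProbabilityMeasure
  rw [← lintegral_comp_prodMk_of_indepFun (F := fun z : ℝ × ℝ × ℝ =>
      F (z.1, regressionSlope X Y P * z.1 + z.2.1, regressionSlope X Z P * z.1 + z.2.2))
    h.fst.aemeasurable (hasGaussianLaw_regressionResidual_prodMk h).snd.aemeasurable
    (indepFun_regressionResidual_prodMk h) (by fun_prop)]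
  simp only [regressionSlope_mul_add_residual]

lemma AbsMonotone.lintegral_abs_rpow_neg_mul_residual_le {f g : ℝ → ℝ≥0∞}
    (hf : AbsMonotone f) (hg : AbsMonotone g) {X Y Z : Ω → ℝ}
    (h : HasGaussianLaw (fun ω => (X ω, Y ω, Z ω)) P) (hX0 : ∫ ω, X ω ∂P = 0)
    (hY0 : ∫ ω, Y ω ∂P = 0) (hZ0 : ∫ ω, Z ω ∂P = 0) (hvX : 0 < Var[X; P])
    {α : ℝ} (hα : 0 < α) :
    (∫⁻ ω, ENNReal.ofReal (|X ω| ^ (-α)) ∂P) *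
        ((∫⁻ ω, f (regressionResidual X Y P ω) ∂P) *
          ∫⁻ ω, g (regressionResidual X Z P ω) ∂P) ≤
      ∫⁻ ω, ENNReal.ofReal (|X ω| ^ (-α)) * (f (Y ω) * g (Z ω)) ∂P := by
  have hP := h.isProbabilityMeasure
  have hfm := hf.measurable
  have hgm := hg.measurable
  have hX := h.fst.integrable
  have hres := hasGaussianLaw_regressionResidual_prodMk h
  have hUV := hres.snd.aemeasurable
  set U := regressionResidual X Y P
  set V := regressionResidual X Z P
  set ρ := P.map fun ω => (U ω, V ω)
  have hρ : IsGaussian ρ := hres.snd.isGaussian_map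
  have hρ₁ : ∫ u, u.1 ∂ρ = 0 := by
    rw [integral_map hUV (by fun_prop)]
    exact integral_regressionResidual hX h.snd.fst.integrable hX0 hY0
  have hρ₂ : ∫ u, u.2 ∂ρ = 0 := by
    rw [integral_map hUV (by fun_prop)]
    exact integral_regressionResidual hX h.snd.snd.integrable hX0 hZ0
  have key := lintegral_abs_rpow_neg_mul_le (Real.toNNReal_pos.2 hvX).ne' hα
    (Measurable.lintegral_prod_right' (f := fun z : ℝ × ℝ × ℝ =>
      f (regressionSlope X Y P * z.1 + z.2.1) * g (regressionSlope X Z P * z.1 + z.2.2))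
      (by fun_prop))
    (hf.lintegral_mul_lintegral_le_lintegral_shift hg hρ₁ hρ₂ _ _)
  rw [← map_eq_gaussianReal_of_integral_eq_zero h.fst hX0] at key
  rw [lintegral_comp_eq_lintegral_regressionResidual h
    (F := fun z => ENNReal.ofReal (|z.1| ^ (-α)) * (f z.2.1 * g z.2.2)) (by fun_prop)]
  simp only [lintegral_const_mul' _ _ ENNReal.ofReal_ne_top]
  rwa [lintegral_map' (by fun_prop) h.fst.aemeasurable, lintegral_map' (by fun_prop) hUV,
    lintegral_map' (by fun_prop) hUV] at key

end GaussianTriple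

section Moments

variable {Ω : Type*} [MeasurableSpace Ω] {P : Measure Ω}

lemma integral_abs_rpow_gaussianReal_zero (v : ℝ≥0) (β : ℝ) :
    ∫ x, |x| ^ β ∂gaussianReal 0 v = (v : ℝ) ^ (β / 2) * ∫ x, |x| ^ β ∂gaussianReal 0 1 := by
  have hmap : (gaussianReal 0 1).map (√v * ·) = gaussianReal 0 v := by
    rw [gaussianReal_map_const_mul, mul_zero, mul_one]
    congr 1
    ext
    exact Real.sq_sqrt v.coe_nonneg
  have habs (x : ℝ) : |√v * x| ^ β = (v : ℝ) ^ (β / 2) * |x| ^ β := by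
    rw [abs_mul, abs_of_nonneg (Real.sqrt_nonneg _), Real.mul_rpow (Real.sqrt_nonneg _)
      (abs_nonneg x), Real.sqrt_eq_rpow, ← Real.rpow_mul v.coe_nonneg, one_div_mul_eq_div]
  rw [← hmap, integral_map (by fun_prop) (measurable_abs.pow_const β).aestronglyMeasurable]
  simp only [habs, integral_const_mul]

lemma integral_abs_rpow_of_hasGaussianLaw {Y : Ω → ℝ} (hY : HasGaussianLaw Y P)
    (hY0 : ∫ ω, Y ω ∂P = 0) (β : ℝ) :
    ∫ ω, |Y ω| ^ β ∂P = Var[Y; P] ^ (β / 2) * ∫ x, |x| ^ β ∂gaussianReal 0 1 := by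
  rw [← integral_map (f := fun x => |x| ^ β) hY.aemeasurable
      (measurable_abs.pow_const β).aestronglyMeasurable,
    map_eq_gaussianReal_of_integral_eq_zero hY hY0, integral_abs_rpow_gaussianReal_zero,
    Real.coe_toNNReal _ (variance_nonneg Y P)]

lemma integral_abs_rpow_regressionResidual {X Y : Ω → ℝ}
    (h : HasGaussianLaw (fun ω => (X ω, Y ω)) P) (hX0 : ∫ ω, X ω ∂P = 0)
    (hY0 : ∫ ω, Y ω ∂P = 0) (hvX : 0 < Var[X; P]) (hvY : 0 < Var[Y; P]) (β : ℝ) :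
    ∫ ω, |regressionResidual X Y P ω| ^ β ∂P =
      (1 - correlation X Y P ^ 2) ^ (β / 2) * ∫ ω, |Y ω| ^ β ∂P := by
  have hP := h.isProbabilityMeasure
  have hvar := variance_regressionResidual h.fst.memLp_two h.snd.memLp_two hvX.ne' hvY.ne'
  have hcorr : 0 ≤ 1 - correlation X Y P ^ 2 :=
    nonneg_of_mul_nonneg_left (hvar ▸ variance_nonneg _ _) hvY
  rw [integral_abs_rpow_of_hasGaussianLaw (hasGaussianLaw_regressionResidual h).snd
      (integral_regressionResidual h.fst.integrable h.snd.integrable hX0 hY0),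
    integral_abs_rpow_of_hasGaussianLaw h.snd hY0, hvar, Real.mul_rpow hcorr hvY.le, mul_assoc]

lemma memLp_abs_rpow_iff {Y : Ω → ℝ} (hY : AEMeasurable Y P) (s : ℝ) {p : ℝ} (hp : 0 < p) :
    MemLp (fun ω => |Y ω| ^ s) (ENNReal.ofReal p) P ↔
      Integrable (fun ω => |Y ω| ^ (s * p)) P := by
  rw [← integrable_norm_rpow_iff (hY.abs.pow_const s).aestronglyMeasurable (by simpa using hp)
    ENNReal.ofReal_ne_top, ENNReal.toReal_ofReal hp.le]
  simp only [Real.norm_of_nonneg (Real.rpow_nonneg (abs_nonneg _) _),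
    ← Real.rpow_mul (abs_nonneg _)]

lemma integrable_abs_rpow_of_hasGaussianLaw {Y : Ω → ℝ} (hY : HasGaussianLaw Y P) {β : ℝ}
    (hβ : 0 ≤ β) : Integrable (fun ω => |Y ω| ^ β) P := by
  have := hY.isProbabilityMeasure
  simpa only [ENNReal.toReal_ofReal hβ, Real.norm_eq_abs] using
    (hY.memLp (p := ENNReal.ofReal β) ENNReal.ofReal_ne_top).integrable_norm_rpow'

lemma integrable_abs_rpow_mul_exp_neg_mul_sq {b s : ℝ} (hb : 0 < b) (hs : -1 < s) :
    Integrable fun x : ℝ => |x| ^ s * Real.exp (-b * x ^ 2) := by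
  have h := (integrable_fun_norm_addHaar (E := ℝ) volume
    (f := fun r => r ^ s * Real.exp (-b * r ^ 2))).2
    (by simpa using integrableOn_rpow_mul_exp_neg_mul_sq hb hs)
  simpa only [Real.norm_eq_abs, sq_abs] using h

lemma integrable_abs_rpow_gaussianReal {v : ℝ≥0} (hv : v ≠ 0) {s : ℝ} (hs : -1 < s) :
    Integrable (fun x => |x| ^ s) (gaussianReal 0 v) := by
  rw [gaussianReal_of_var_ne_zero _ hv,
    integrable_withDensity_iff_integrable_smul' (measurable_gaussianPDF _ _)
      (ae_of_all _ fun _ => gaussianPDF_lt_top)]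
  convert! (integrable_abs_rpow_mul_exp_neg_mul_sq (b := (2 * v)⁻¹) (by positivity) hs).const_mul
    (√(2 * Real.pi * v))⁻¹ using 2 with x
  rw [toReal_gaussianPDF, gaussianPDFReal, smul_eq_mul, sub_zero, neg_div, div_eq_inv_mul, neg_mul]
  ring

lemma integrable_abs_rpow_neg_mul_abs_rpow_mul_abs_rpow {X Y Z : Ω → ℝ} (hX : HasGaussianLaw X P)
    (hY : HasGaussianLaw Y P) (hZ : HasGaussianLaw Z P) (hX0 : ∫ ω, X ω ∂P = 0)
    (hvX : 0 < Var[X; P]) {α β γ : ℝ} (hα : α ∈ Ioo 0 1) (hβ : 0 ≤ β) (hγ : 0 ≤ γ) :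
    Integrable (fun ω => |X ω| ^ (-α) * (|Y ω| ^ β * |Z ω| ^ γ)) P := by
  obtain ⟨p, hp, hpα⟩ := exists_between ((one_lt_inv₀ hα.1).2 hα.2)
  have hpq : p.HolderConjugate (p / (p - 1)) := .conjExponent hp
  set q := p / (p - 1)
  have hq : 0 < q := hpq.symm.pos
  have hα' : -1 < -α * p := by
    linarith [mul_inv_cancel₀ hα.1.ne', mul_lt_mul_of_pos_left hpα hα.1]
  have hXp : MemLp (fun ω => |X ω| ^ (-α)) (ENNReal.ofReal p) P := by
    rw [memLp_abs_rpow_iff hX.aemeasurable _ hpq.pos]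
    have := integrable_abs_rpow_gaussianReal (Real.toNNReal_pos.2 hvX).ne' hα'
    rw [← map_eq_gaussianReal_of_integral_eq_zero hX hX0] at this
    exact this.comp_aemeasurable hX.aemeasurable
  have memLp_pow {W : Ω → ℝ} (hW : HasGaussianLaw W P) {s : ℝ} (hs : 0 ≤ s) :
      MemLp (fun ω => |W ω| ^ s) (ENNReal.ofReal (2 * q)) P := by
    rw [memLp_abs_rpow_iff hW.aemeasurable _ (by positivity)]
    exact integrable_abs_rpow_of_hasGaussianLaw hW (by positivity)
  have h2q : Real.HolderTriple (2 * q) (2 * q) q :=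
    ⟨by field_simp; norm_num, by positivity, by positivity⟩
  have := hpq.ennrealOfReal
  have := h2q.ennrealOfReal
  have hYZ : MemLp (fun ω => |Y ω| ^ β * |Z ω| ^ γ) (ENNReal.ofReal q) P :=
    (memLp_pow hZ hγ).mul' (memLp_pow hY hβ)
  exact hXp.integrable_mul hYZ

lemma toReal_lintegral_ofReal_abs_rpow {Y : Ω → ℝ} (hY : AEMeasurable Y P) (s : ℝ) :
    (∫⁻ ω, ENNReal.ofReal (|Y ω| ^ s) ∂P).toReal = ∫ ω, |Y ω| ^ s ∂P :=
  (integral_eq_lintegral_of_nonneg_ae (ae_of_all _ fun _ => Real.rpow_nonneg (abs_nonneg _) s)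
    (hY.abs.pow_const s).aestronglyMeasurable).symm

lemma integral_abs_rpow_mul_integral_residual_le {X Y Z : Ω → ℝ}
    (h : HasGaussianLaw (fun ω => (X ω, Y ω, Z ω)) P)
    (hX0 : ∫ ω, X ω ∂P = 0) (hY0 : ∫ ω, Y ω ∂P = 0) (hZ0 : ∫ ω, Z ω ∂P = 0)
    (hvX : 0 < Var[X; P]) {α β γ : ℝ} (hα : α ∈ Ioo 0 1) (hβ : 0 ≤ β) (hγ : 0 ≤ γ) :
    (∫ ω, |X ω| ^ (-α) ∂P) * ((∫ ω, |regressionResidual X Y P ω| ^ β ∂P) *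
        ∫ ω, |regressionResidual X Z P ω| ^ γ ∂P) ≤
      ∫ ω, |X ω| ^ (-α) * (|Y ω| ^ β * |Z ω| ^ γ) ∂P := by
  have hres := hasGaussianLaw_regressionResidual_prodMk h
  have hint := integrable_abs_rpow_neg_mul_abs_rpow_mul_abs_rpow h.fst h.snd.fst h.snd.snd hX0 hvX
    hα hβ hγ
  rw [integral_eq_lintegral_of_nonneg_ae (ae_of_all _ fun ω => by positivity) hint.1,
    ← toReal_lintegral_ofReal_abs_rpow h.fst.aemeasurable,
    ← toReal_lintegral_ofReal_abs_rpow hres.snd.fst.aemeasurable,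
    ← toReal_lintegral_ofReal_abs_rpow hres.snd.snd.aemeasurable,
    ← ENNReal.toReal_mul, ← ENNReal.toReal_mul]
  refine ENNReal.toReal_mono hint.lintegral_lt_top.ne ?_
  simp only [ENNReal.ofReal_mul (Real.rpow_nonneg (abs_nonneg _) _)]
  exact (absMonotone_ofReal_abs_rpow hβ).lintegral_abs_rpow_neg_mul_residual_le
    (absMonotone_ofReal_abs_rpow hγ) h hX0 hY0 hZ0 hvX hα.1

theorem one_sub_correlation_sq_rpow_mul_integral_le {X Y Z : Ω → ℝ}
    (h : HasGaussianLaw (fun ω => (X ω, Y ω, Z ω)) P)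
    (hX0 : ∫ ω, X ω ∂P = 0) (hY0 : ∫ ω, Y ω ∂P = 0) (hZ0 : ∫ ω, Z ω ∂P = 0)
    (hvX : 0 < Var[X; P]) (hvY : 0 < Var[Y; P]) (hvZ : 0 < Var[Z; P])
    {α β γ : ℝ} (hα : α ∈ Ioo 0 1) (hβ : 0 ≤ β) (hγ : 0 ≤ γ) :
    (1 - correlation X Y P ^ 2) ^ (β / 2) * (1 - correlation X Z P ^ 2) ^ (γ / 2) *
        ((∫ ω, |X ω| ^ (-α) ∂P) * (∫ ω, |Y ω| ^ β ∂P) * ∫ ω, |Z ω| ^ γ ∂P) ≤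
      ∫ ω, |X ω| ^ (-α) * |Y ω| ^ β * |Z ω| ^ γ ∂P := by
  let x := ContinuousLinearMap.fst ℝ ℝ (ℝ × ℝ)
  let y := (ContinuousLinearMap.fst ℝ ℝ ℝ).comp (.snd ℝ ℝ (ℝ × ℝ))
  let z := (ContinuousLinearMap.snd ℝ ℝ ℝ).comp (.snd ℝ ℝ (ℝ × ℝ))
  have hXY : HasGaussianLaw (fun ω => (X ω, Y ω)) P := h.map_fun (x.prod y)
  have hXZ : HasGaussianLaw (fun ω => (X ω, Z ω)) P := h.map_fun (x.prod z)
  have key := integral_abs_rpow_mul_integral_residual_le h hX0 hY0 hZ0 hvX hα hβ hγ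
  rw [integral_abs_rpow_regressionResidual hXY hX0 hY0 hvX hvY,
    integral_abs_rpow_regressionResidual hXZ hX0 hZ0 hvX hvZ] at key
  simp only [mul_assoc (|X _| ^ (-α))]
  linarith

end Moments

section CharFun

variable {Ω : Type*} [MeasurableSpace Ω] {μ : Measure Ω} {ι : Type*} [Fintype ι]

/-- The random vector `X` is centered Gaussian with covariance matrix `S`, expressed through its
characteristic function `u ↦ exp (-uᵀSu / 2)` and thus allowing degenerate vectors. Only the
quadratic form of `S` enters, so `S` is determined by `X` only up to an antisymmetric part. -/
def HasGaussianCharFun (X : Ω → ι → ℝ) (S : Matrix ι ι ℝ) (μ : Measure Ω) : Prop :=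
  ∀ u : ι → ℝ, ∫ ω, Complex.exp (Complex.I * ((u ⬝ᵥ X ω : ℝ) : ℂ)) ∂μ =
    Complex.exp (-(((u ⬝ᵥ S *ᵥ u : ℝ) : ℂ)) / 2)

namespace HasGaussianCharFun

variable {X : Ω → ι → ℝ} {S : Matrix ι ι ℝ}

lemma quadraticForm_nonneg [IsProbabilityMeasure μ] (h : HasGaussianCharFun X S μ) (u : ι → ℝ) :
    0 ≤ u ⬝ᵥ S *ᵥ u := by
  have hnorm : ‖∫ ω, Complex.exp (Complex.I * ((u ⬝ᵥ X ω : ℝ) : ℂ)) ∂μ‖ ≤ 1 := by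
    simpa using norm_integral_le_of_norm_le_const (μ := μ) (C := 1)
      (ae_of_all _ fun ω => (Complex.norm_exp_I_mul_ofReal (u ⬝ᵥ X ω)).le)
  have hre : (-((u ⬝ᵥ S *ᵥ u : ℝ) : ℂ) / 2).re = -(u ⬝ᵥ S *ᵥ u) / 2 := by
    rw [Complex.div_ofNat_re, Complex.neg_re, Complex.ofReal_re]
  rw [h u, Complex.norm_exp, hre, Real.exp_le_one_iff] at hnorm
  linarith

lemma map_dotProduct [IsProbabilityMeasure μ] (h : HasGaussianCharFun X S μ)
    (hX : AEMeasurable X μ) (u : ι → ℝ) :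
    μ.map (fun ω => u ⬝ᵥ X ω) = gaussianReal 0 (u ⬝ᵥ S *ᵥ u).toNNReal := by
  have hu : AEMeasurable (fun ω => u ⬝ᵥ X ω) μ := by
    unfold dotProduct
    fun_prop
  have := Measure.isProbabilityMeasure_map hu
  refine Measure.ext_of_charFun (funext fun t => ?_)
  have htu : (t • u) ⬝ᵥ S *ᵥ (t • u) = t ^ 2 * (u ⬝ᵥ S *ᵥ u) := by
    rw [mulVec_smul, dotProduct_smul, smul_dotProduct, smul_eq_mul, smul_eq_mul]
    ring
  calc charFun (μ.map fun ω => u ⬝ᵥ X ω) t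
      = ∫ ω, Complex.exp (Complex.I * (((t • u) ⬝ᵥ X ω : ℝ) : ℂ)) ∂μ := by
        rw [charFun_apply_real, integral_map hu (by fun_prop)]
        refine integral_congr_ae (ae_of_all _ fun ω => ?_)
        simp only [smul_dotProduct, smul_eq_mul, Complex.ofReal_mul]
        ring_nf
    _ = charFun (gaussianReal 0 (u ⬝ᵥ S *ᵥ u).toNNReal) t := by
        rw [h (t • u), htu, charFun_gaussianReal, Real.coe_toNNReal _ (h.quadraticForm_nonneg u)]
        push_cast
        ring_nf

lemma hasGaussianLaw [IsProbabilityMeasure μ] (h : HasGaussianCharFun X S μ)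
    (hX : AEMeasurable X μ) : HasGaussianLaw X μ := by
  classical
  refine ⟨isGaussian_of_map_eq_gaussianReal fun L => ?_⟩
  have hL : (⇑L ∘ X) = fun ω => (fun i => L (Pi.single i 1)) ⬝ᵥ X ω := by
    ext ω
    conv_lhs => rw [Function.comp_apply, pi_eq_sum_univ' (X ω)]
    simp [dotProduct, map_sum, mul_comm]
  rw [AEMeasurable.map_map_of_aemeasurable (by fun_prop) hX, hL]
  exact ⟨_, _, h.map_dotProduct hX _⟩

lemma hasLaw_dotProduct [IsProbabilityMeasure μ] (h : HasGaussianCharFun X S μ)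
    (hX : AEMeasurable X μ) (u : ι → ℝ) :
    HasLaw (fun ω => u ⬝ᵥ X ω) (gaussianReal 0 (u ⬝ᵥ S *ᵥ u).toNNReal) μ where
  aemeasurable := by
    unfold dotProduct
    fun_prop
  map_eq := h.map_dotProduct hX u

lemma integral_dotProduct [IsProbabilityMeasure μ] (h : HasGaussianCharFun X S μ)
    (hX : AEMeasurable X μ) (u : ι → ℝ) : ∫ ω, u ⬝ᵥ X ω ∂μ = 0 := by
  rw [(h.hasLaw_dotProduct hX u).integral_eq, integral_id_gaussianReal]

lemma variance_dotProduct [IsProbabilityMeasure μ] (h : HasGaussianCharFun X S μ)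
    (hX : AEMeasurable X μ) (u : ι → ℝ) : Var[fun ω => u ⬝ᵥ X ω; μ] = u ⬝ᵥ S *ᵥ u := by
  rw [(h.hasLaw_dotProduct hX u).variance_eq, variance_id_gaussianReal,
    Real.coe_toNNReal _ (h.quadraticForm_nonneg u)]

lemma integral_apply [IsProbabilityMeasure μ] (h : HasGaussianCharFun X S μ)
    (hX : AEMeasurable X μ) (i : ι) : ∫ ω, X ω i ∂μ = 0 := by
  classical
  simpa only [single_one_dotProduct] using h.integral_dotProduct hX (Pi.single i 1)

lemma variance_apply [IsProbabilityMeasure μ] (h : HasGaussianCharFun X S μ)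
    (hX : AEMeasurable X μ) (i : ι) : Var[fun ω => X ω i; μ] = S i i := by
  classical
  simpa only [single_one_dotProduct, mulVec_single_one, col_apply] using
    h.variance_dotProduct hX (Pi.single i 1)

lemma covariance_apply [IsProbabilityMeasure μ] (h : HasGaussianCharFun X S μ)
    (hX : AEMeasurable X μ) (hS : S.IsSymm) (i j : ι) :
    cov[fun ω => X ω i, fun ω => X ω j; μ] = S i j := by
  classical
  have memLp (i : ι) : MemLp (fun ω => X ω i) 2 μ :=
    (HasGaussianLaw.eval (X := fun i ω => X ω i) (h.hasGaussianLaw hX) i).memLp_two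
  have hvar := h.variance_dotProduct hX (Pi.single i 1 + Pi.single j 1)
  simp only [add_dotProduct, mulVec_add, dotProduct_add, single_one_dotProduct, mulVec_single_one,
    col_apply] at hvar
  rw [variance_fun_add (memLp i) (memLp j), h.variance_apply hX, h.variance_apply hX] at hvar
  linarith [hS.apply i j]

end HasGaussianCharFun

end CharFun

end GaussianProduct

theorem gpi_dim_three_lower_bound
    {Ω : Type*} [MeasurableSpace Ω] (μ : Measure Ω) [IsProbabilityMeasure μ]
    (X : Ω → (Fin 3 → ℝ)) (hXm : Measurable X)
    (S : Matrix (Fin 3) (Fin 3) ℝ) (hS : S.IsSymm)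
    (hGauss : ∀ u : Fin 3 → ℝ,
      ∫ ω, Complex.exp (Complex.I * ((u ⬝ᵥ X ω : ℝ) : ℂ)) ∂μ =
        Complex.exp (-(((u ⬝ᵥ S *ᵥ u : ℝ) : ℂ)) / 2))
    (hvar : ∀ i, 0 < S i i)
    {α₁ α₂ α₃ : ℝ} (hα₁ : α₁ ∈ Set.Ioo (0 : ℝ) 1) (hα₂ : 0 < α₂) (hα₃ : 0 < α₃) :
    (1 - (S 0 1 / (Real.sqrt (S 0 0) * Real.sqrt (S 1 1))) ^ 2) ^ (α₂ / 2) *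
        (1 - (S 0 2 / (Real.sqrt (S 0 0) * Real.sqrt (S 2 2))) ^ 2) ^ (α₃ / 2) *
        ((∫ ω, |X ω 0| ^ (-α₁) ∂μ) * (∫ ω, |X ω 1| ^ α₂ ∂μ) *
          ∫ ω, |X ω 2| ^ α₃ ∂μ) ≤
      ∫ ω, |X ω 0| ^ (-α₁) * |X ω 1| ^ α₂ * |X ω 2| ^ α₃ ∂μ := by
  have h : GaussianProduct.HasGaussianCharFun X S μ := hGauss
  have hX : AEMeasurable X μ := hXm.aemeasurable
  let x (i : Fin 3) := ContinuousLinearMap.proj (R := ℝ) (φ := fun _ : Fin 3 => ℝ) i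
  have htriple : HasGaussianLaw (fun ω => (X ω 0, X ω 1, X ω 2)) μ :=
    (h.hasGaussianLaw hX).map_fun ((x 0).prod ((x 1).prod (x 2)))
  have hpos (i : Fin 3) : 0 < Var[fun ω => X ω i; μ] := (h.variance_apply hX i).symm ▸ hvar i
  simpa only [GaussianProduct.correlation, h.variance_apply hX, h.covariance_apply hX hS] using
    GaussianProduct.one_sub_correlation_sq_rpow_mul_integral_le htriple (h.integral_apply hX 0)
      (h.integral_apply hX 1) (h.integral_apply hX 2) (hpos 0) (hpos 1) (hpos 2) hα₁ hα₂.le hα₃.le
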